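/- The set of values produced by the construction functions on Exp is exactly the set of rE-normal terms: for every t : Exp, t ∈ Set.range normE if and only if there is no u : Exp with rE t u (equivalently, t contains no subterm of the form Plus v Zero or Plus Zero v). -/

import Mathlib

/-- Arithmetic expressions. -/
inductive Exp : Type
  | Zero : Exp
  | One : Exp
  | Opp : Exp → Exp
  | Plus : Exp → Exp → Exp
deriving DecidableEq

/-- The construction function for `Plus`. -/
def plusC : Exp → Exp → Exp
  | Exp.Zero, u => u
  | t, Exp.Zero => t
  | t, u => Exp.Plus t u

/-- The normalization function associated to the construction functions. -/
def normE : Exp → Exp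
  | Exp.Zero => Exp.Zero
  | Exp.One => Exp.One
  | Exp.Opp t => Exp.Opp (normE t)
  | Exp.Plus t u => plusC (normE t) (normE u)

/-- The rewrite relation erasing neutral `Zero`s, closed under contexts. -/
inductive rE : Exp → Exp → Prop
  | plusZero (t : Exp) : rE (Exp.Plus t Exp.Zero) t
  | zeroPlus (t : Exp) : rE (Exp.Plus Exp.Zero t) t
  | opp {t t' : Exp} : rE t t' → rE (Exp.Opp t) (Exp.Opp t')
  | plusL {t t' : Exp} (u : Exp) : rE t t' → rE (Exp.Plus t u) (Exp.Plus t' u)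
  | plusR {t t' : Exp} (u : Exp) : rE t t' → rE (Exp.Plus u t) (Exp.Plus u t')

/-! The function `normE` takes values in normal terms and fixes every normal term, so its range,
its set of fixed points and the set of normal terms coincide. -/

theorem zero_plusC (t : Exp) : plusC Exp.Zero t = t := rfl

theorem plusC_zero (t : Exp) : plusC t Exp.Zero = t := by
  cases t <;> rfl

theorem plusC_of_ne_zero {t u : Exp} (ht : t ≠ Exp.Zero) (hu : u ≠ Exp.Zero) :
    plusC t u = Exp.Plus t u := by
  cases t <;> cases u <;> first | rfl | contradiction

namespace Exp

variable {t u : Exp}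

/-- The normal forms of the rewrite relation `rE`: terms that cannot be rewritten. -/
def IsNormal (t : Exp) : Prop := ¬∃ u, rE t u

theorem isNormal_zero : IsNormal Zero := nofun

theorem isNormal_one : IsNormal One := nofun

theorem isNormal_opp_iff : IsNormal (Opp t) ↔ IsNormal t where
  mp h := fun ⟨_, ht⟩ => h ⟨_, .opp ht⟩
  mpr h := fun ⟨_, .opp ht⟩ => h ⟨_, ht⟩

theorem isNormal_plus_iff :
    IsNormal (Plus t u) ↔ t ≠ Zero ∧ u ≠ Zero ∧ IsNormal t ∧ IsNormal u := by
  constructor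
  · refine fun h => ⟨?_, ?_, fun ⟨_, ht⟩ => h ⟨_, .plusL u ht⟩, fun ⟨_, hu⟩ => h ⟨_, .plusR t hu⟩⟩
    · rintro rfl
      exact h ⟨_, .zeroPlus u⟩
    · rintro rfl
      exact h ⟨_, .plusZero t⟩
  · rintro ⟨ht₀, hu₀, ht, hu⟩ ⟨_, h⟩
    cases h with
    | plusZero => exact hu₀ rfl
    | zeroPlus => exact ht₀ rfl
    | plusL _ h => exact ht ⟨_, h⟩
    | plusR _ h => exact hu ⟨_, h⟩

protected theorem IsNormal.plusC (ht : IsNormal t) (hu : IsNormal u) : IsNormal (plusC t u) := by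
  rcases eq_or_ne t Zero with rfl | ht₀
  · rwa [zero_plusC]
  rcases eq_or_ne u Zero with rfl | hu₀
  · rwa [plusC_zero]
  rw [plusC_of_ne_zero ht₀ hu₀]
  exact isNormal_plus_iff.mpr ⟨ht₀, hu₀, ht, hu⟩

theorem isNormal_normE (t : Exp) : IsNormal (normE t) := by
  induction t with
  | Zero => exact isNormal_zero
  | One => exact isNormal_one
  | Opp t ih => exact isNormal_opp_iff.mpr ih
  | Plus t u iht ihu => exact iht.plusC ihu

theorem IsNormal.normE_eq_self (h : IsNormal t) : normE t = t := by
  induction t with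
  | Zero => rfl
  | One => rfl
  | Opp t ih => rw [normE, ih (isNormal_opp_iff.mp h)]
  | Plus t u iht ihu =>
    obtain ⟨ht₀, hu₀, ht, hu⟩ := isNormal_plus_iff.mp h
    rw [normE, iht ht, ihu hu, plusC_of_ne_zero ht₀ hu₀]

end Exp

theorem range_normE_eq_rE_normal (t : Exp) :
    t ∈ Set.range normE ↔ ¬∃ u, rE t u := by
  constructor
  · rintro ⟨s, rfl⟩
    exact s.isNormal_normE
  · intro (ht : t.IsNormal)
    exact ⟨t, ht.normE_eq_self⟩
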